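/- Let K be a field of characteristic zero and F ⊆ K a subfield. Suppose q₀, q₁ : F → K are quadratic functions with q₀(x) = x² for all x ∈ F, and q₁(xy) = q₀(x)q₁(y) + q₁(x)q₀(y) for all nonzero x, y ∈ F (the degree-one generalized moment condition on the multiplicative group of F). Then there exists a second-order derivation d : F → K such that q₁(x) = 4x·d(x) − d(x²) for all x ∈ F; equivalently, the function a(x) := q₁(x)/x² is additive on the multiplicative group F \ {0} and has the form a(x) = 4·d(x)/x − d(x²)/x². -/

import Mathlib

/-- `B : F → F → K` is symmetric and additive in each variable. -/
def IsSymmBiadditive {K : Type*} [Field K] (F : Subfield K) (B : F → F → K) : Prop :=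
  (∀ x y : F, B x y = B y x) ∧
  (∀ x y z : F, B (x + y) z = B x z + B y z) ∧
  (∀ x y z : F, B x (y + z) = B x y + B x z)

/-- `q : F → K` is a quadratic function: the trace of a symmetric bi-additive map. -/
def IsQuadratic {K : Type*} [Field K] (F : Subfield K) (q : F → K) : Prop :=
  ∃ B : F → F → K, IsSymmBiadditive F B ∧ ∀ x : F, q x = B x x

/-- `d : F → K` is a second-order derivation: `d` is additive and there is a map
`B` with `d(xy) - x d(y) - d(x) y = B(x,y)` which is a derivation (additive and
Leibniz) in each variable. -/
def IsSecondOrderDerivation {K : Type*} [Field K] (F : Subfield K) (d : F → K) : Prop :=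
  (∀ x y : F, d (x + y) = d x + d y) ∧
  ∃ B : F → F → K,
    (∀ x y : F, d (x * y) - (x : K) * d y - d x * (y : K) = B x y) ∧
    (∀ y u v : F, B (u + v) y = B u y + B v y) ∧
    (∀ y u v : F, B (u * v) y = (u : K) * B v y + (v : K) * B u y) ∧
    (∀ x u v : F, B x (u + v) = B x u + B x v) ∧
    (∀ x u v : F, B x (u * v) = (u : K) * B x v + (v : K) * B x u)

/-!
Write `q x = B x x` with `B` symmetric and biadditive. Polarizing `q (xy) = x² q y + y² q x` in `x`
and then in `y` gives
`B (xy) (uv) + B (xv) (uy) = 2xu B y v + 2yv B x u`.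
Put `D x = B x 1`. At `u = v = 1` the identity reads `B x y = 2x D y + 2y D x - D (xy)`, so `D`
determines `B`, and `x = y` gives `q x = 4x D x - D (x²)`. At `v = 1` alone, after `B` has been
eliminated in favour of `D`, it becomes the three-variable identity saying that `D` is a
second-order derivation.
-/

section Module

variable {A M : Type*} [CommRing A] [AddCommGroup M] [Module A M]

/-- The failure `d (x * y) - x • d y - y • d x` of an additive map `d` to satisfy the Leibniz rule.
A second-order derivation is a map for which it is a derivation in each variable. -/
def leibnizDefect (d : A →+ M) (x y : A) : M :=
  d (x * y) - x • d y - y • d x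

lemma leibnizDefect_comm (d : A →+ M) (x y : A) : leibnizDefect d x y = leibnizDefect d y x := by
  simp only [leibnizDefect, mul_comm x y]
  abel

lemma leibnizDefect_add_left (d : A →+ M) (x y z : A) :
    leibnizDefect d (x + y) z = leibnizDefect d x z + leibnizDefect d y z := by
  simp only [leibnizDefect, add_mul, map_add]
  module

/-- A symmetric biadditive map `B` whose associated quadratic function `q x = B x x` satisfies the
degree-one moment condition `q (x * y) = x ^ 2 • q y + y ^ 2 • q x`. -/
structure IsMomentForm (B : A →+ A →+ M) : Prop where
  symm (x y : A) : B x y = B y x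
  moment (x y : A) : B (x * y) (x * y) = x ^ 2 • B y y + y ^ 2 • B x x

namespace IsMomentForm

variable {B : A →+ A →+ M}

lemma apply_mul_mul_self (hB : IsMomentForm B) (h2 : IsSMulRegular M (2 : A)) (x u y : A) :
    B (x * y) (u * y) = (x * u) • B y y + y ^ 2 • B x u := by
  have hsum := hB.moment (x + u) y
  simp only [add_mul, map_add, AddMonoidHom.add_apply, hB.moment, hB.symm (u * y) (x * y),
    hB.symm u x] at hsum
  apply h2
  linear_combination (norm := module) hsum

lemma apply_mul_mul_add (hB : IsMomentForm B) (h2 : IsSMulRegular M (2 : A)) (x u y v : A) :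
    B (x * y) (u * v) + B (x * v) (u * y) =
      (2 * x * u) • B y v + (2 * y * v) • B x u := by
  have hsum := hB.apply_mul_mul_self h2 x u (y + v)
  simp only [mul_add, map_add, AddMonoidHom.add_apply, hB.apply_mul_mul_self h2,
    hB.symm v y] at hsum
  linear_combination (norm := module) hsum

lemma apply_eq (hB : IsMomentForm B) (h2 : IsSMulRegular M (2 : A)) (x y : A) :
    B x y = (2 * x) • B y 1 + (2 * y) • B x 1 - B (x * y) 1 := by
  have h := hB.apply_mul_mul_add h2 x 1 y 1
  simp only [mul_one, one_mul] at h
  linear_combination (norm := module) h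

lemma apply_self (hB : IsMomentForm B) (h2 : IsSMulRegular M (2 : A)) (x : A) :
    B x x = (4 * x) • B x 1 - B (x ^ 2) 1 := by
  rw [hB.apply_eq h2, ← sq]
  module

lemma apply_mul_mul_one (hB : IsMomentForm B) (h2 : IsSMulRegular M (2 : A)) (x y z : A) :
    B (x * y * z) 1 = x • B (y * z) 1 + y • B (x * z) 1 + z • B (x * y) 1
      - (y * z) • B x 1 - (x * z) • B y 1 - (x * y) • B z 1 := by
  have h := hB.apply_mul_mul_add h2 x z y 1
  simp only [mul_one] at h
  rw [hB.apply_eq h2 (x * y) z, hB.apply_eq h2 x (z * y), hB.apply_eq h2 x z,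
    mul_comm z y, ← mul_assoc x y z] at h
  apply h2
  linear_combination (norm := module) -h

lemma leibnizDefect_mul_left (hB : IsMomentForm B) (h2 : IsSMulRegular M (2 : A)) (x y z : A) :
    leibnizDefect (B.flip 1) (x * y) z =
      x • leibnizDefect (B.flip 1) y z + y • leibnizDefect (B.flip 1) x z := by
  simp only [leibnizDefect, AddMonoidHom.flip_apply, hB.apply_mul_mul_one h2 x y z]
  module

end IsMomentForm

end Module

section Subfield

variable {K : Type*} [Field K] {F : Subfield K}

lemma isSecondOrderDerivation_of_leibnizDefect_mul_left (d : F →+ K)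
    (hd : ∀ x y z : F, leibnizDefect d (x * y) z =
      x • leibnizDefect d y z + y • leibnizDefect d x z) :
    IsSecondOrderDerivation F d := by
  refine ⟨map_add d, leibnizDefect d, fun x y => ?_, fun z x y => leibnizDefect_add_left d x y z,
    fun z x y => hd x y z, fun z x y => ?_, fun z x y => ?_⟩
  · rw [mul_comm (d x)]
    rfl
  · simp only [leibnizDefect_comm d z, leibnizDefect_add_left]
  · simp only [leibnizDefect_comm d z]
    exact hd x y z

lemma IsQuadratic.exists_addMonoidHom {q : F → K} (hq : IsQuadratic F q) :
    ∃ B : F →+ F →+ K, (∀ x y, B x y = B y x) ∧ ∀ x, q x = B x x := by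
  obtain ⟨B, ⟨hsymm, hadd_left, hadd_right⟩, hqB⟩ := hq
  exact ⟨.mk' (fun x => .mk' (B x) (hadd_right x)) fun x y => AddMonoidHom.ext (hadd_left x y),
    hsymm, hqB⟩

lemma IsQuadratic.exists_isMomentForm {q : F → K} (hq : IsQuadratic F q)
    (hmom : ∀ x y : F, x ≠ 0 → y ≠ 0 → q (x * y) = (x : K) ^ 2 * q y + q x * (y : K) ^ 2) :
    ∃ B : F →+ F →+ K, IsMomentForm B ∧ ∀ x, q x = B x x := by
  obtain ⟨B, hsymm, hqB⟩ := hq.exists_addMonoidHom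
  refine ⟨B, ⟨hsymm, fun x y => ?_⟩, hqB⟩
  rcases eq_or_ne x 0 with rfl | hx
  · simp
  rcases eq_or_ne y 0 with rfl | hy
  · simp
  rw [← hqB, ← hqB, ← hqB, hmom x y hx hy, mul_comm (q x)]
  rfl

end Subfield

theorem stmt_16_general {K : Type*} [Field K] [NeZero (2 : K)] (F : Subfield K)
    (q : F → K) (hq : IsQuadratic F q)
    (hmom : ∀ x y : F, x ≠ 0 → y ≠ 0 →
      q (x * y) = (x : K) ^ 2 * q y + q x * (y : K) ^ 2) :
    ∃ d : F → K, IsSecondOrderDerivation F d ∧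
      (∀ x : F, q x = 4 * (x : K) * d x - d (x ^ 2)) ∧
      (∀ x y : F, x ≠ 0 → y ≠ 0 →
        q (x * y) / ((x : K) * (y : K)) ^ 2 =
          q x / (x : K) ^ 2 + q y / (y : K) ^ 2) ∧
      (∀ x : F, x ≠ 0 →
        q x / (x : K) ^ 2 = 4 * d x / (x : K) - d (x ^ 2) / (x : K) ^ 2) := by
  obtain ⟨B, hB, hqB⟩ := hq.exists_isMomentForm hmom
  have h2 : IsSMulRegular K (2 : F) := fun _ _ h => mul_left_cancel₀ (two_ne_zero (α := K)) h
  have hform (x : F) : q x = 4 * (x : K) * B x 1 - B (x ^ 2) 1 := by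
    rw [hqB, hB.apply_self h2]
    rfl
  refine ⟨B.flip 1, isSecondOrderDerivation_of_leibnizDefect_mul_left _
    (hB.leibnizDefect_mul_left h2), hform, fun x y hx hy => ?_, fun x hx => ?_⟩
  · have hx' : (x : K) ≠ 0 := by simpa using hx
    have hy' : (y : K) ≠ 0 := by simpa using hy
    rw [hmom x y hx hy]
    field_simp
    ring
  · have hx' : (x : K) ≠ 0 := by simpa using hx
    rw [hform, AddMonoidHom.flip_apply, AddMonoidHom.flip_apply]
    field_simp

theorem stmt_16 {K : Type*} [Field K] [CharZero K] (F : Subfield K)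
    (q₀ q₁ : F → K) (hq₀quad : IsQuadratic F q₀) (hq₁quad : IsQuadratic F q₁)
    (hq₀ : ∀ x : F, q₀ x = (x : K) ^ 2)
    (hmom : ∀ x y : F, x ≠ 0 → y ≠ 0 →
      q₁ (x * y) = q₀ x * q₁ y + q₁ x * q₀ y) :
    ∃ d : F → K, IsSecondOrderDerivation F d ∧
      (∀ x : F, q₁ x = 4 * (x : K) * d x - d (x ^ 2)) ∧
      (∀ x y : F, x ≠ 0 → y ≠ 0 →
        q₁ (x * y) / ((x : K) * (y : K)) ^ 2 =
          q₁ x / (x : K) ^ 2 + q₁ y / (y : K) ^ 2) ∧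
      (∀ x : F, x ≠ 0 →
        q₁ x / (x : K) ^ 2 = 4 * d x / (x : K) - d (x ^ 2) / (x : K) ^ 2) :=
  stmt_16_general F q₁ hq₁quad fun x y hx hy => by rw [hmom x y hx hy, hq₀, hq₀]
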